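/- Fix N ≥ 1, intrinsic frequencies ω_1,…,ω_N ∈ ℝ, ε ∈ (0,1], and κ > (2+ε)‖Ω‖_∞. Then the m-measure of the set of initial data (θ_1^0,…,θ_N^0) ∈ [−π,π]^N whose solution of the prototypical Winfree model satisfies all of the following is at least 1 − exp(−ε²N/25): (i) R(t) ≥ 1/√2 − 3ε/20 for all t ≥ 0; (ii) sup_{t≥0} θ_i(t) − inf_{t≥0} θ_i(t) < 2π for every i = 1,…,N; (iii) for every i ∈ {1,…,N} and every t_0 ≥ 0 with cos θ_i(t_0) ≥ −1/√2, one has cos θ_i(t) ≥ −1/√2 for all t ≥ t_0 and cos θ_i(t) ≥ 1/√2 for all t ≥ t_0 + (2+ε)π/(κ − (2+ε)‖Ω‖_∞). -/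

import Mathlib

/-!
Write `k = 1/√2`. Along a solution, `cos θᵢ` has derivative `sin θᵢ (κ R sin θᵢ - ωᵢ)`, which is
positive whenever `|cos θᵢ| ≤ k` (so that `|sin θᵢ| ≥ k`) and `κ R k > |ωᵢ|`. Under the assumption on
`κ` the latter holds as soon as `R ≥ r := 2k/(2+ε)`. While this is so, no level in `[-k, k]` is
crossed downwards by `cos θᵢ` (`cos_barrier`), and the band `[-k, k]` is traversed in time at most
`π/δ`, where `δ = κ/(2+ε) - ‖Ω‖_∞` (`cos_arrival`); this is (iii). The oscillation bound (ii) follows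
from the forward invariance of the arc `cos ≥ -k` by a topological argument (`osc_of_invariant`).

For (i), the barrier shows that, while `R ≥ r`, a particle loses at most `1 - k` of its initial
cosine, and loses anything at all only if it starts with `|cos| > k`, an event of probability at most
one half. So `cos θᵢ(t) ≥ cosFloor (θᵢ(0))`, where `cosFloor` takes values in an interval of length `2`
and has mean at least `-(1-k)/2`. By `hoeffding`, the average of `cosFloor` over the particles is at
least `k - 3ε/20 - 1` outside a set of measure `exp(-ε²N/25)`. For initial data outside that set,
`R ≥ k - 3ε/20 > r` propagates to all times (`orderParam_bootstrap`).
-/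

open MeasureTheory Filter

/-- The order parameter `R(t) = (1/N) ∑ⱼ (1 + cos θⱼ(t))` of the prototypical Winfree model. -/
noncomputable def orderParam (N : ℕ) (θ : Fin N → ℝ → ℝ) (t : ℝ) : ℝ :=
  (N : ℝ)⁻¹ * ∑ j, (1 + Real.cos (θ j t))

/-- `θ` is the solution of the prototypical Winfree model with frequencies `ω`,
coupling strength `κ` and initial data `θ0`. -/
def IsWinfreeSol (N : ℕ) (ω : Fin N → ℝ) (κ : ℝ) (θ0 : Fin N → ℝ)
    (θ : Fin N → ℝ → ℝ) : Prop :=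
  (∀ i, θ i 0 = θ0 i) ∧
  ∀ i, ∀ t : ℝ, 0 ≤ t →
    HasDerivAt (θ i)
      (ω i - κ / (N : ℝ) * (∑ j, (1 + Real.cos (θ j t))) * Real.sin (θ i t)) t

/-- `sup_{t ≥ 0} f(t) - inf_{t ≥ 0} f(t) < 2π` (in particular `f` is bounded on `[0,∞)`). -/
def OscLt2Pi (f : ℝ → ℝ) : Prop :=
  BddAbove (f '' Set.Ici 0) ∧ BddBelow (f '' Set.Ici 0) ∧
    sSup (f '' Set.Ici 0) - sInf (f '' Set.Ici 0) < 2 * Real.pi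

/-- The normalized Lebesgue measure on the box `[-π, π]^N`. -/
noncomputable def normBox (N : ℕ) : Measure (Fin N → ℝ) :=
  (ENNReal.ofReal ((2 * Real.pi) ^ N))⁻¹ •
    (volume.restrict (Set.univ.pi fun _ : Fin N => Set.Icc (-Real.pi) Real.pi))


/-! ### Global existence of the solution -/

/-- The vector field of the Winfree model on `ℝ^N`. -/
noncomputable def winfreeField (N : ℕ) (ω : Fin N → ℝ) (κ : ℝ) (x : Fin N → ℝ) : Fin N → ℝ :=
  fun i => ω i - κ / (N : ℝ) * (∑ j, (1 + Real.cos (x j))) * Real.sin (x i)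

lemma winfreeField_contDiff (N : ℕ) (ω : Fin N → ℝ) (κ : ℝ) :
    ContDiff ℝ 1 (winfreeField N ω κ) := by
  unfold winfreeField
  fun_prop

lemma winfreeField_bound (N : ℕ) (ω : Fin N → ℝ) (κ : ℝ) :
    ∃ L : NNReal, ∀ x, ‖winfreeField N ω κ x‖ ≤ L := by
  refine ⟨(‖ω‖ + |κ / (N : ℝ)| * (N * 2)).toNNReal, fun x => ?_⟩
  rw [Real.coe_toNNReal _ (by positivity), pi_norm_le_iff_of_nonneg (by positivity)]
  intro i
  have h1 : |∑ j, (1 + Real.cos (x j))| ≤ N * 2 := by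
    calc |∑ j, (1 + Real.cos (x j))| ≤ ∑ j, |1 + Real.cos (x j)| := Finset.abs_sum_le_sum_abs _ _
      _ ≤ ∑ _j : Fin N, (2 : ℝ) := by
          refine Finset.sum_le_sum fun j _ => ?_
          rw [abs_le]
          constructor <;> linarith [Real.neg_one_le_cos (x j), Real.cos_le_one (x j)]
      _ = N * 2 := by simp
  have h2 : |κ / (N : ℝ) * (∑ j, (1 + Real.cos (x j))) * Real.sin (x i)|
      ≤ |κ / (N : ℝ)| * (N * 2) := by
    rw [abs_mul, abs_mul]
    calc _ ≤ |κ / (N : ℝ)| * |∑ j, (1 + Real.cos (x j))| * 1 := by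
          gcongr; exact Real.abs_sin_le_one _
      _ ≤ _ := by rw [mul_one]; gcongr
  calc ‖winfreeField N ω κ x i‖
      ≤ ‖ω i‖ + |κ / (N : ℝ) * (∑ j, (1 + Real.cos (x j))) * Real.sin (x i)| := norm_sub_le _ _
    _ ≤ _ := add_le_add (norm_le_pi_norm ω i) h2

open scoped Manifold in
/-- Since the field is `C¹` and bounded, Picard–Lindelöf gives a solution on `(-1, 1)` from every
initial point; a uniform existence time yields global solutions. -/
lemma exists_winfreeSol (N : ℕ) (ω : Fin N → ℝ) (κ : ℝ) (θ0 : Fin N → ℝ) :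
    ∃ θ : Fin N → ℝ → ℝ, (∀ i, θ i 0 = θ0 i) ∧
      ∀ i, ∀ t : ℝ, 0 ≤ t → HasDerivAt (θ i)
        (ω i - κ / (N : ℝ) * (∑ j, (1 + Real.cos (θ j t))) * Real.sin (θ i t)) t := by
  obtain ⟨L, hL⟩ := winfreeField_bound N ω κ
  have hsm := winfreeField_contDiff N ω κ
  let v : (x : Fin N → ℝ) → TangentSpace 𝓘(ℝ, Fin N → ℝ) x := winfreeField N ω κ
  obtain ⟨γ, h0, hγ⟩ := exists_isMIntegralCurve_of_isMIntegralCurveOn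
    (I := 𝓘(ℝ, Fin N → ℝ)) (M := Fin N → ℝ) (v := v)
    (contMDiff_vectorSpace_iff_contDiff.2 hsm) one_pos (by
      intro x
      have hll : LocallyLipschitzOn (Metric.closedBall x (L : ℝ)) (winfreeField N ω κ) :=
        hsm.locallyLipschitz.locallyLipschitzOn
      obtain ⟨K, hK⟩ := hll.exists_lipschitzOnWith_of_compact (isCompact_closedBall x (L : ℝ))
      have hP : IsPicardLindelof (fun _ : ℝ => winfreeField N ω κ)
          (tmin := -1) (tmax := 1) ⟨0, by norm_num⟩ x L 0 L K :=
        { lipschitzOnWith := fun _ _ => hK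
          continuousOn := fun _ _ => continuousOn_const
          norm_le := fun _ _ y _ => hL y
          mul_max_le := by simp }
      obtain ⟨α, hα0, hα⟩ := hP.exists_eq_forall_mem_Icc_hasDerivWithinAt₀
      refine ⟨α, hα0, fun t ht => ?_⟩
      have := (hα t (Set.Ioo_subset_Icc_self ht)).mono (Set.Ioo_subset_Icc_self)
      exact (hasMFDerivWithinAt_iff_hasFDerivWithinAt.2 this.hasFDerivWithinAt)) θ0
  refine ⟨fun i t => γ t i, fun i => by simp [h0], fun i t _ => ?_⟩
  have h1 : HasDerivAt γ (winfreeField N ω κ (γ t)) t := by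
    have h2 : HasFDerivAt γ
        ((1 : ℝ →L[ℝ] ℝ).smulRight (winfreeField N ω κ (γ t))) t :=
      hasMFDerivAt_iff_hasFDerivAt.1 (hγ t)
    simpa using h2.hasDerivAt
  exact (hasDerivAt_pi.1 h1) i

/-! ### Monotonicity of the cosine of a phase -/

lemma inv_sqrt_two_facts : 0 < 1 / Real.sqrt 2 ∧ (1 / Real.sqrt 2) ^ 2 = 1 / 2 := by
  refine ⟨by positivity, ?_⟩
  rw [div_pow, Real.sq_sqrt (by norm_num)]; norm_num

/-- Here `-sin x * (w - A * sin x)` is the speed of `cos θ` when `θ = x` moves with velocity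
`w - A * sin θ`. In the band `|cos x| ≤ k = 1/√2` one has `|sin x| ≥ k`, so the coupling term
dominates as soon as `A * k` exceeds `|w|`. -/
lemma speed_bound {A w δ x k : ℝ} (hk0 : 0 < k) (hk2 : k ^ 2 = 1 / 2)
    (hx : |Real.cos x| ≤ k) (hA : δ ≤ A * k - |w|) (hδ : 0 ≤ δ) :
    k * δ ≤ -Real.sin x * (w - A * Real.sin x) := by
  have hc : Real.cos x ^ 2 ≤ 1 / 2 := by
    rw [← hk2, ← sq_abs (Real.cos x)]; gcongr
  have hs : k ≤ |Real.sin x| := by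
    rw [← abs_of_pos hk0, ← sq_le_sq, hk2]
    linarith [Real.sin_sq_add_cos_sq x]
  have hA0 : 0 ≤ A := by
    by_contra h
    have : A * k < 0 := mul_neg_of_neg_of_pos (not_le.1 h) hk0
    linarith [abs_nonneg w]
  have h1 : w * Real.sin x ≤ |w| * |Real.sin x| := by
    rw [← abs_mul]; exact le_abs_self _
  have h2 : A * k ≤ A * |Real.sin x| := by gcongr
  calc k * δ ≤ |Real.sin x| * (A * |Real.sin x| - |w|) := by
        apply mul_le_mul hs (by linarith) hδ (abs_nonneg _)
    _ = A * Real.sin x ^ 2 - |w| * |Real.sin x| := by rw [← sq_abs (Real.sin x)]; ring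
    _ ≤ _ := by linarith

/-- Every level `b ∈ [-1/√2, 1/√2]` of `cos f` can be crossed only upwards, because the speed of
`cos f` is positive there. -/
lemma cos_barrier {f A : ℝ → ℝ} {w a T b k : ℝ} (hk0 : 0 < k) (hk2 : k ^ 2 = 1 / 2)
    (hd : ∀ t ∈ Set.Icc a T, HasDerivAt f (w - A t * Real.sin (f t)) t)
    (hA : ∀ t ∈ Set.Icc a T, |w| < A t * k) (hb : |b| ≤ k) (h0 : b ≤ Real.cos (f a)) :
    ∀ t ∈ Set.Icc a T, b ≤ Real.cos (f t) := by
  have hc : ∀ t ∈ Set.Icc a T, HasDerivAt (fun t => -Real.cos (f t))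
      (-(-Real.sin (f t) * (w - A t * Real.sin (f t)))) t := fun t ht => (hd t ht).cos.neg
  intro t ht
  have := image_le_of_deriv_right_lt_deriv_boundary' (f := fun t => -Real.cos (f t))
    (B := fun _ => -b) (B' := fun _ => 0)
    (fun t ht => (hc t ht).continuousAt.continuousWithinAt)
    (fun t ht => (hc t (Set.Ico_subset_Icc_self ht)).hasDerivWithinAt)
    (by simpa using h0) continuousOn_const (fun t _ => hasDerivWithinAt_const _ _ _)
    (fun x hx hxb => by
      have hx' := Set.Ico_subset_Icc_self hx
      have hcb : Real.cos (f x) = b := neg_injective hxb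
      have hs := speed_bound (x := f x) hk0 hk2 (by rw [hcb]; exact hb)
        (le_refl (A x * k - |w|)) (by linarith [hA x hx'])
      have := mul_pos hk0 (sub_pos.2 (hA x hx'))
      linarith) ht
  simpa using this

/-- `cos f` crosses the band `[-k, k]`, whose width is `2 * k`, at speed at least `k * δ`, hence
within time `2 / δ`. -/
lemma cos_arrival {f A : ℝ → ℝ} {w a T k δ : ℝ} (hk0 : 0 < k) (hk2 : k ^ 2 = 1 / 2)
    (hd : ∀ t ∈ Set.Icc a T, HasDerivAt f (w - A t * Real.sin (f t)) t)
    (hδ : 0 < δ)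
    (hA : ∀ t ∈ Set.Icc a T, δ ≤ A t * k - |w|) (h0 : -k ≤ Real.cos (f a))
    (hT : 2 ≤ δ * (T - a)) : k ≤ Real.cos (f T) := by
  by_contra! hlt
  have haT : a ≤ T := by
    by_contra h
    have := mul_neg_of_pos_of_neg hδ (by linarith : T - a < 0)
    linarith
  have hA' : ∀ t ∈ Set.Icc a T, |w| < A t * k := fun t ht => by linarith [hA t ht]
  have hlow := cos_barrier hk0 hk2 hd hA' (by rw [abs_neg, abs_of_pos hk0]) h0
  have hup : ∀ t ∈ Set.Icc a T, Real.cos (f t) ≤ k := by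
    intro t ht
    by_contra! h
    have hsub : Set.Icc t T ⊆ Set.Icc a T := Set.Icc_subset_Icc_left ht.1
    have := cos_barrier hk0 hk2 (fun s hs => hd s (hsub hs)) (fun s hs => hA' s (hsub hs))
      (abs_of_pos hk0).le h.le T ⟨ht.2, le_rfl⟩
    linarith
  have hc : ∀ t ∈ Set.Icc a T, HasDerivAt (fun t => Real.cos (f t))
      (-Real.sin (f t) * (w - A t * Real.sin (f t))) t := fun t ht => (hd t ht).cos
  have := (convex_Icc a T).mul_sub_le_image_sub_of_le_deriv (f := fun t => Real.cos (f t))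
    (C := k * δ)
    (fun t ht => (hc t ht).continuousAt.continuousWithinAt)
    (fun t ht => (hc t (interior_subset ht)).differentiableAt.differentiableWithinAt)
    (fun t ht => by
      have ht' := interior_subset ht
      rw [(hc t ht').deriv]
      exact speed_bound hk0 hk2 (abs_le.2 ⟨hlow t ht', hup t ht'⟩) (hA t ht') hδ.le)
    a ⟨le_rfl, haT⟩ T ⟨haT, le_rfl⟩ haT
  have h3 : k * 2 ≤ k * (δ * (T - a)) := by gcongr
  linarith

/-! ### Oscillation of a phase -/

lemma cos_le_cos_iff_abs_le {y r : ℝ} (hy : |y| ≤ Real.pi) (hr0 : 0 ≤ r) (hr : r ≤ Real.pi) :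
    Real.cos r ≤ Real.cos y ↔ |y| ≤ r := by
  rw [← Real.cos_abs y]
  exact Real.strictAntiOn_cos.le_iff_ge ⟨hr0, hr⟩ ⟨abs_nonneg _, hy⟩

lemma cos_three_pi_div_four : Real.cos (3 * Real.pi / 4) = -(1 / Real.sqrt 2) := by
  rw [show 3 * Real.pi / 4 = Real.pi - Real.pi / 4 by ring, Real.cos_pi_sub, Real.cos_pi_div_four,
    Real.sqrt_div_self']

lemma good_iff {x : ℝ} (n : ℤ) (hx : |x - 2 * Real.pi * n| ≤ Real.pi) :
    -(1 / Real.sqrt 2) ≤ Real.cos x ↔ |x - 2 * Real.pi * n| ≤ 3 * Real.pi / 4 := by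
  have hp := Real.pi_pos
  rw [← cos_le_cos_iff_abs_le hx (by positivity) (by linarith), cos_three_pi_div_four,
    show x - 2 * Real.pi * n = x - n * (2 * Real.pi) by ring, Real.cos_sub_int_mul_two_pi]

lemma bad_iff {x : ℝ} (n : ℤ) (hx : |x - (2 * Real.pi * n + Real.pi)| ≤ Real.pi) :
    Real.cos x < -(1 / Real.sqrt 2) ↔ |x - (2 * Real.pi * n + Real.pi)| < Real.pi / 4 := by
  have hp := Real.pi_pos
  have h1 : Real.cos (x - (2 * Real.pi * n + Real.pi)) = - Real.cos x := by
    rw [show x - (2 * Real.pi * n + Real.pi) = (x - Real.pi) - n * (2 * Real.pi) by ring,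
      Real.cos_sub_int_mul_two_pi, Real.cos_sub_pi]
  have h2 : Real.cos (Real.pi / 4) = 1 / Real.sqrt 2 := by
    rw [Real.cos_pi_div_four, Real.sqrt_div_self']
  rw [← Real.cos_abs] at h1
  have := Real.strictAntiOn_cos.lt_iff_gt (a := Real.pi / 4) ⟨by linarith, by linarith⟩
    ⟨abs_nonneg _, hx⟩
  rw [← this, h1, h2]
  constructor <;> intro h <;> linarith

/-- A continuous function on a connected set that starts within distance `r` of `c` stays there,
if it has no value at distance in `(r, r + δ]` from `c`: it cannot jump over this gap. -/
lemma trapped {S : Set ℝ} (hS : IsPreconnected S) {f : ℝ → ℝ} (hf : ContinuousOn f S)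
    {c r δ : ℝ} (hδ : 0 < δ) {a : ℝ} (ha : a ∈ S) (hfa : |f a - c| ≤ r)
    (hav : ∀ t ∈ S, |f t - c| ≤ r + δ → |f t - c| ≤ r) : ∀ t ∈ S, |f t - c| ≤ r := by
  intro t ht
  by_contra! hlt
  have hg : ContinuousOn (fun s => |f s - c|) S := (hf.sub continuousOn_const).abs
  have hmem : min (|f t - c|) (r + δ) ∈ Set.Icc (|f a - c|) (|f t - c|) :=
    ⟨le_min (by linarith) (by linarith), min_le_left _ _⟩
  obtain ⟨s, hs, hs'⟩ := (hS.image _ hg).ordConnected.out ⟨a, ha, rfl⟩ ⟨t, ht, rfl⟩ hmem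
  have h1 := hav s hs (hs'.trans_le (min_le_right _ _))
  have h2 : r < min (|f t - c|) (r + δ) := lt_min hlt (by linarith)
  exact absurd (h2.trans_eq hs'.symm) (not_lt.2 h1)

lemma osc_of_bounds {f : ℝ → ℝ} {m M : ℝ} (hm : ∀ t, 0 ≤ t → m ≤ f t)
    (hM : ∀ t, 0 ≤ t → f t ≤ M) (h : M - m < 2 * Real.pi) : OscLt2Pi f := by
  have hM' : ∀ y ∈ f '' Set.Ici 0, y ≤ M := by rintro _ ⟨t, ht, rfl⟩; exact hM t ht
  have hm' : ∀ y ∈ f '' Set.Ici 0, m ≤ y := by rintro _ ⟨t, ht, rfl⟩; exact hm t ht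
  have hne : (f '' Set.Ici (0 : ℝ)).Nonempty := ⟨f 0, 0, Set.self_mem_Ici, rfl⟩
  refine ⟨⟨M, hM'⟩, ⟨m, hm'⟩, ?_⟩
  linarith [csSup_le hne hM', le_csInf hne hm']

lemma good_stays {f : ℝ → ℝ} (hf : ContinuousOn f (Set.Ici 0)) {a : ℝ} (ha : 0 ≤ a)
    (hg : ∀ t, a ≤ t → -(1 / Real.sqrt 2) ≤ Real.cos (f t)) (n : ℤ)
    (hfa : |f a - 2 * Real.pi * n| ≤ Real.pi) :
    ∀ t, a ≤ t → |f t - 2 * Real.pi * n| ≤ 3 * Real.pi / 4 := by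
  have hp := Real.pi_pos
  refine trapped (S := Set.Ici a) isPreconnected_Ici (hf.mono (Set.Ici_subset_Ici.2 ha))
    (δ := Real.pi / 4) (by positivity) Set.self_mem_Ici ((good_iff n hfa).1 (hg a le_rfl)) ?_
  intro t ht h
  exact (good_iff n (by linarith)).1 (hg t ht)

lemma bad_stays {f : ℝ → ℝ} {S : Set ℝ} (hS : IsPreconnected S) (hf : ContinuousOn f S)
    {a : ℝ} (ha : a ∈ S)
    (hg : ∀ t ∈ S, Real.cos (f t) < -(1 / Real.sqrt 2)) (n : ℤ)
    (hfa : |f a - (2 * Real.pi * n + Real.pi)| ≤ Real.pi) :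
    ∀ t ∈ S, |f t - (2 * Real.pi * n + Real.pi)| < Real.pi / 4 := by
  have hp := Real.pi_pos
  have := trapped hS hf (r := Real.pi / 4) (δ := Real.pi / 4) (by positivity) ha
    ((bad_iff n hfa).1 (hg a ha)).le
    (fun t ht h => ((bad_iff n (by linarith)).1 (hg t ht)).le)
  intro t ht
  exact (bad_iff n (by linarith [this t ht])).1 (hg t ht)

lemma exists_center (x : ℝ) : ∃ n : ℤ, |x - 2 * Real.pi * n| ≤ Real.pi := by
  have hp := Real.pi_pos
  refine ⟨round (x / (2 * Real.pi)), ?_⟩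
  have h := abs_sub_round (x / (2 * Real.pi))
  have h2 : x - 2 * Real.pi * round (x / (2 * Real.pi))
      = (2 * Real.pi) * (x / (2 * Real.pi) - round (x / (2 * Real.pi))) := by
    field_simp
  rw [h2, abs_mul, abs_of_pos (by positivity : (0:ℝ) < 2 * Real.pi)]
  nlinarith

/-- Once `f` enters the arc `cos ≥ -1/√2` it remains in one lift of it, an interval of length
`3π/2`; before that it remains in one lift of the complementary open arc, an interval of length
`π/2`. The union of both has length `2π`, and the inequality is strict because, by compactness,
`f` stays at a positive distance from the end of the bad arc that it does not leave through. -/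
lemma osc_of_invariant {f : ℝ → ℝ} (hf : ContinuousOn f (Set.Ici 0))
    (hinv : ∀ s, 0 ≤ s → -(1 / Real.sqrt 2) ≤ Real.cos (f s) →
      ∀ t, s ≤ t → -(1 / Real.sqrt 2) ≤ Real.cos (f t)) : OscLt2Pi f := by
  have hp := Real.pi_pos
  by_cases h0 : -(1 / Real.sqrt 2) ≤ Real.cos (f 0)
  · obtain ⟨n, hn⟩ := exists_center (f 0)
    have h := good_stays hf le_rfl (hinv 0 le_rfl h0) n hn
    exact osc_of_bounds (fun t ht => by linarith [(abs_le.1 (h t ht)).1])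
      (fun t ht => (by linarith [(abs_le.1 (h t ht)).2] :
        f t ≤ 2 * Real.pi * n + 3 * Real.pi / 4)) (m := 2 * Real.pi * n - 3 * Real.pi / 4)
        (by linarith)
  push Not at h0
  obtain ⟨n, hn⟩ : ∃ n : ℤ, |f 0 - (2 * Real.pi * n + Real.pi)| ≤ Real.pi := by
    obtain ⟨n, hn⟩ := exists_center (f 0 - Real.pi)
    exact ⟨n, by rwa [show f 0 - (2 * Real.pi * n + Real.pi) = f 0 - Real.pi - 2 * Real.pi * n by
      ring]⟩
  set c := 2 * Real.pi * n + Real.pi with hc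
  by_cases hex : ∃ t, 0 ≤ t ∧ -(1 / Real.sqrt 2) ≤ Real.cos (f t)
  swap
  · push Not at hex
    have h := bad_stays isPreconnected_Ici hf Set.self_mem_Ici hex n hn
    exact osc_of_bounds (m := c - Real.pi / 4) (M := c + Real.pi / 4)
      (fun t ht => by linarith [(abs_lt.1 (h t ht)).1])
      (fun t ht => by linarith [(abs_lt.1 (h t ht)).2]) (by linarith)
  -- the first entrance time into the arc `cos ≥ -1/√2`
  set G : Set ℝ := Set.Ici 0 ∩ (fun t => Real.cos (f t)) ⁻¹' Set.Ici (-(1 / Real.sqrt 2)) with hG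
  have hGc : IsClosed G :=
    (Real.continuous_cos.comp_continuousOn hf).preimage_isClosed_of_isClosed isClosed_Ici
      isClosed_Ici
  have hGb : BddBelow G := ⟨0, fun t ht => ht.1⟩
  have hGn : G.Nonempty := hex
  set T := sInf G with hT
  have hTG : T ∈ G := hGc.csInf_mem hGn hGb
  have hT0 : 0 ≤ T := hTG.1
  have hTg : -(1 / Real.sqrt 2) ≤ Real.cos (f T) := hTG.2
  have hTpos : 0 < T := by
    rcases hT0.eq_or_lt with h | h
    · rw [← h] at hTg; linarith
    · exact h
  have hbad : ∀ t ∈ Set.Ico 0 T, Real.cos (f t) < -(1 / Real.sqrt 2) := by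
    intro t ht
    by_contra! h
    exact absurd (csInf_le hGb (⟨ht.1, h⟩ : t ∈ G)) (not_le.2 ht.2)
  have hbs := bad_stays isPreconnected_Ico (hf.mono fun t ht => ht.1)
    (Set.left_mem_Ico.2 hTpos) hbad n hn
  have hfT : ContinuousOn f (Set.Icc 0 T) := hf.mono fun t ht => ht.1
  have hTc : |f T - c| ≤ Real.pi / 4 := by
    have hcl : T ∈ closure (Set.Ico 0 T) := by
      rw [closure_Ico hTpos.ne]; exact ⟨hT0, le_rfl⟩
    have hct : ContinuousWithinAt f (Set.Ico 0 T) T :=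
      (hfT T ⟨hT0, le_rfl⟩).mono Set.Ico_subset_Icc_self
    have := hct.mem_closure hcl (t := {y | |y - c| ≤ Real.pi / 4}) (fun t ht => (hbs t ht).le)
    rwa [IsClosed.closure_eq] at this
    exact isClosed_le (by fun_prop) continuous_const
  have hTe : |f T - c| = Real.pi / 4 := by
    refine le_antisymm hTc (not_lt.1 fun h => ?_)
    exact absurd ((bad_iff n (by linarith)).2 h) (not_lt.2 hTg)
  have hgood := hinv T hT0 hTg
  have hne : (Set.Icc 0 T).Nonempty := ⟨0, le_rfl, hT0⟩
  rcases abs_eq (by positivity) |>.1 hTe with hR | hL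
  · -- the particle leaves through the upper end of the bad arc
    have hs := good_stays hf hT0 hgood (n + 1) (by
      push_cast; rw [abs_le]; constructor <;> linarith)
    push_cast at hs
    obtain ⟨t1, ht1, hmin⟩ := isCompact_Icc.exists_isMinOn hne hfT
    have hlow : c - Real.pi / 4 < f t1 := by
      rcases ht1.2.lt_or_eq with h | h
      · linarith [(abs_lt.1 (hbs t1 ⟨ht1.1, h⟩)).1]
      · rw [h]; linarith
    refine osc_of_bounds (m := f t1) (M := c + 7 * Real.pi / 4) (fun t ht => ?_) (fun t ht => ?_)
      (by linarith)
    · rcases le_total t T with h | h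
      · exact hmin ⟨ht, h⟩
      · have h1 := hmin (⟨hT0, le_rfl⟩ : T ∈ Set.Icc 0 T)
        have h2 := (abs_le.1 (hs t h)).1
        simp only [Set.mem_ofPred_eq] at h1
        linarith
    · rcases lt_or_ge t T with h | h
      · linarith [(abs_lt.1 (hbs t ⟨ht, h⟩)).2]
      · linarith [(abs_le.1 (hs t h)).2]
  · -- the particle leaves through the lower end of the bad arc
    have hs := good_stays hf hT0 hgood n (by
      rw [abs_le]; constructor <;> linarith)
    obtain ⟨t1, ht1, hmax⟩ := isCompact_Icc.exists_isMaxOn hne hfT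
    have hup : f t1 < c + Real.pi / 4 := by
      rcases ht1.2.lt_or_eq with h | h
      · linarith [(abs_lt.1 (hbs t1 ⟨ht1.1, h⟩)).2]
      · rw [h]; linarith
    refine osc_of_bounds (m := c - 7 * Real.pi / 4) (M := f t1) (fun t ht => ?_) (fun t ht => ?_)
      (by linarith)
    · rcases lt_or_ge t T with h | h
      · linarith [(abs_lt.1 (hbs t ⟨ht, h⟩)).1]
      · linarith [(abs_le.1 (hs t h)).1]
    · rcases le_total t T with h | h
      · exact hmax ⟨ht, h⟩
      · have h1 := hmax (⟨hT0, le_rfl⟩ : T ∈ Set.Icc 0 T)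
        have h2 := (abs_le.1 (hs t h)).2
        simp only [Set.mem_ofPred_eq] at h1
        linarith

/-! ### Concentration of the initial data -/

/-- The indicator function of the set `{|cos| > 1/√2}`, as a function of the angle. -/
noncomputable def outer (x : ℝ) : ℝ := {y : ℝ | 1 / 2 < Real.cos y ^ 2}.indicator 1 x

/-- A lower bound for `cos θ(t)` at all later times in terms of the initial angle: `cos` of a
particle never drops below this value while the order parameter is large enough. The possible loss
`1 - 1/√2` affects only particles that start with `|cos| > 1/√2`. -/
noncomputable def cosFloor (x : ℝ) : ℝ :=
  Real.cos x - (1 - 1 / Real.sqrt 2) * outer x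

/-- The uniform probability measure on `[-π, π]`. -/
noncomputable def circ : Measure ℝ :=
  (ENNReal.ofReal (2 * Real.pi))⁻¹ • (volume.restrict (Set.Icc (-Real.pi) Real.pi))

instance : IsProbabilityMeasure circ := by
  have hp := Real.pi_pos
  refine ⟨?_⟩
  rw [circ, Measure.smul_apply, Measure.restrict_apply_univ, Real.volume_Icc, smul_eq_mul,
    show Real.pi - -Real.pi = 2 * Real.pi by ring]
  exact ENNReal.inv_mul_cancel (by simpa using hp) ENNReal.ofReal_ne_top

lemma normBox_eq (N : ℕ) : normBox N = Measure.pi fun _ : Fin N => circ := by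
  symm
  apply Measure.pi_eq
  intro s _
  have hp := Real.pi_pos
  rw [normBox, volume_pi, Measure.restrict_pi_pi, Measure.smul_apply, Measure.pi_pi]
  simp only [circ, Measure.smul_apply, smul_eq_mul]
  rw [Finset.prod_mul_distrib, Finset.prod_const, Finset.card_univ, Fintype.card_fin,
    ENNReal.ofReal_pow (by positivity), ENNReal.inv_pow]

lemma measurable_outer : Measurable outer :=
  measurable_one.indicator (measurableSet_lt measurable_const (by fun_prop))

lemma outer_mem (x : ℝ) : 0 ≤ outer x ∧ outer x ≤ 1 := by
  unfold outer; simp only [Set.indicator_apply]; split_ifs <;> simp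

lemma measurable_cosFloor : Measurable cosFloor :=
  Real.measurable_cos.sub (measurable_outer.const_mul _)

lemma intervalIntegrable_outer (a b : ℝ) (c : ℝ) :
    IntervalIntegrable (fun x => outer (x + c)) volume a b := by
  refine (intervalIntegrable_const (c := (1 : ℝ))).mono_fun
    (measurable_outer.comp (measurable_id.add_const c)).aestronglyMeasurable
    (Eventually.of_forall fun x => ?_)
  simp only [Real.norm_eq_abs, abs_of_nonneg (outer_mem _).1, abs_one]
  exact (outer_mem _).2

/-- The set `{|cos| > 1/√2}` and its translate by `π/2` are disjoint, so it fills at most half of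
a period. -/
lemma integral_outer : ∫ x in (-Real.pi)..Real.pi, outer x ≤ Real.pi := by
  have hp := Real.pi_pos
  have hper : Function.Periodic outer (2 * Real.pi) := fun x => by
    unfold outer; simp [Set.indicator_apply]
  have hshift : ∫ x in (-Real.pi)..Real.pi, outer (x + Real.pi / 2)
      = ∫ x in (-Real.pi)..Real.pi, outer x := by
    rw [intervalIntegral.integral_comp_add_right]
    have := hper.intervalIntegral_add_eq (-Real.pi + Real.pi / 2) (-Real.pi)
    convert this using 2 <;> ring
  have hsum : ∫ x in (-Real.pi)..Real.pi, (outer x + outer (x + Real.pi / 2))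
      ≤ ∫ x in (-Real.pi)..Real.pi, (1 : ℝ) := by
    refine intervalIntegral.integral_mono_on (by linarith) ?_ intervalIntegrable_const ?_
    · exact (by simpa using intervalIntegrable_outer _ _ 0 :
        IntervalIntegrable outer volume _ _).add (intervalIntegrable_outer _ _ _)
    · intro x _
      have := Real.sin_sq_add_cos_sq x
      unfold outer
      simp only [Set.indicator_apply, Set.mem_ofPred_eq, Real.cos_add_pi_div_two, neg_sq,
        Pi.one_apply]
      split_ifs <;> linarith
  rw [intervalIntegral.integral_add (by simpa using intervalIntegrable_outer _ _ 0)
    (intervalIntegrable_outer _ _ _), hshift] at hsum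
  simp at hsum
  linarith

lemma integral_cosFloor : -(1 - 1 / Real.sqrt 2) / 2 ≤ ∫ x, cosFloor x ∂circ := by
  have hp := Real.pi_pos
  have hk : 1 / Real.sqrt 2 ≤ 1 := by
    rw [div_le_one (by positivity)]; exact Real.one_le_sqrt.2 (by norm_num)
  rw [circ, integral_smul_measure, ENNReal.toReal_inv, ENNReal.toReal_ofReal (by positivity),
    integral_Icc_eq_integral_Ioc, ← intervalIntegral.integral_of_le (by linarith)]
  have h1 : ∫ x in (-Real.pi)..Real.pi, cosFloor x
      = 0 - (1 - 1 / Real.sqrt 2) * ∫ x in (-Real.pi)..Real.pi, outer x := by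
    unfold cosFloor
    rw [intervalIntegral.integral_sub (Real.continuous_cos.intervalIntegrable _ _)
      ((by simpa using intervalIntegrable_outer _ _ 0 :
        IntervalIntegrable outer volume _ _).const_mul _), intervalIntegral.integral_const_mul]
    simp
  rw [h1, smul_eq_mul]
  have h2 := mul_le_mul_of_nonneg_left integral_outer (sub_nonneg.2 hk)
  rw [le_inv_mul_iff₀ (by positivity)]
  linarith

lemma cosFloor_mem (x : ℝ) :
    cosFloor x ∈ Set.Icc (1 / Real.sqrt 2 - 2) (1 / Real.sqrt 2) := by
  have hk0 : 0 < 1 / Real.sqrt 2 := by positivity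
  have hk2 : (1 / Real.sqrt 2) ^ 2 = 1 / 2 := by
    rw [div_pow, Real.sq_sqrt (by norm_num)]; norm_num
  set k := 1 / Real.sqrt 2
  have h1 := Real.neg_one_le_cos x
  have h2 := Real.cos_le_one x
  unfold cosFloor outer
  by_cases h : 1 / 2 < Real.cos x ^ 2
  · simp only [Set.indicator_apply, Set.mem_ofPred_eq, h, if_true, Pi.one_apply]
    constructor <;> linarith
  · simp only [Set.indicator_apply, Set.mem_ofPred_eq, h, if_false]
    constructor <;> nlinarith

/-- Hoeffding's inequality for the independent variables `-cosFloor (θ0 j)`, which have mean at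
most `(1 - 1/√2)/2` and take values in an interval of length `2`. -/
lemma hoeffding (N : ℕ) (hN : 1 ≤ N) (ε : ℝ) (hε : ε ∈ Set.Ioc (0:ℝ) 1) :
    ENNReal.ofReal (1 - Real.exp (-(ε^2 * N) / 25)) ≤
      normBox N {θ0 | N * (1 / Real.sqrt 2 - 3 * ε / 20 - 1) ≤ ∑ j, cosFloor (θ0 j)} := by
  obtain ⟨hε0, hε1⟩ := hε
  have hN0 : (0 : ℝ) < N := by exact_mod_cast hN
  rw [normBox_eq]
  set μ := Measure.pi fun _ : Fin N => circ
  set G := {θ0 : Fin N → ℝ | N * (1 / Real.sqrt 2 - 3 * ε / 20 - 1) ≤ ∑ j, cosFloor (θ0 j)}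
  set m := ∫ x, -cosFloor x ∂circ with hm
  have hm' : m ≤ (1 - 1 / Real.sqrt 2) / 2 := by
    rw [hm, integral_neg]; linarith [integral_cosFloor]
  have hX : ProbabilityTheory.HasSubgaussianMGF (fun x => -cosFloor x - m) 1 circ := by
    have := ProbabilityTheory.hasSubgaussianMGF_of_mem_Icc (μ := circ) (X := fun x => -cosFloor x)
      (a := -(1 / Real.sqrt 2)) (b := 2 - 1 / Real.sqrt 2) measurable_cosFloor.neg.aemeasurable
      (Eventually.of_forall fun x => by
        have := cosFloor_mem x
        constructor <;> linarith [this.1, this.2])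
    convert this using 1
    rw [sub_neg_eq_add, sub_add_cancel]
    ext; simp
  have hind : ProbabilityTheory.iIndepFun
      (fun (i : Fin N) (θ : Fin N → ℝ) => -cosFloor (θ i) - m) μ :=
    ProbabilityTheory.iIndepFun_pi (X := fun _ x => -cosFloor x - m)
      fun i => (measurable_cosFloor.neg.sub_const m).aemeasurable
  have hXi : ∀ i ∈ (Finset.univ : Finset (Fin N)), ProbabilityTheory.HasSubgaussianMGF
      (fun θ : Fin N → ℝ => -cosFloor (θ i) - m) 1 μ := by
    intro i _
    have hmp := measurePreserving_eval (fun _ : Fin N => circ) i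
    refine ProbabilityTheory.HasSubgaussianMGF.of_map
      (X := fun x => -cosFloor x - m) hmp.measurable.aemeasurable ?_
    rw [hmp.map_eq]; exact hX
  have hH := ProbabilityTheory.HasSubgaussianMGF.measure_sum_ge_le_of_iIndepFun hind hXi
    (ε := N * (Real.sqrt 2 / 5 * ε)) (by positivity)
  -- the deviation `√2/5 * ε` per particle is the one whose Hoeffding bound is `exp (-ε² N / 25)`
  have hexp : -(N * (Real.sqrt 2 / 5 * ε)) ^ 2 / (2 * ((∑ i : Fin N, (1 : NNReal) : NNReal) : ℝ))
      = -(ε^2 * N) / 25 := by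
    have h2 : Real.sqrt 2 ^ 2 = 2 := Real.sq_sqrt (by norm_num)
    simp
    field_simp
    rw [h2]; ring
  rw [hexp] at hH
  have hGm : MeasurableSet G := measurableSet_le measurable_const
    (Finset.measurable_sum _ fun i _ => measurable_cosFloor.comp (measurable_pi_apply i))
  have hs1 : Real.sqrt 2 ≤ 1.4143 := by
    rw [Real.sqrt_le_left (by norm_num)]; norm_num
  have hs : 1 / Real.sqrt 2 = Real.sqrt 2 / 2 := by rw [← Real.sqrt_div_self']
  have hsub : Gᶜ ⊆ {θ | N * (Real.sqrt 2 / 5 * ε) ≤ ∑ i : Fin N, (-cosFloor (θ i) - m)} := by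
    intro θ hθ
    have hθ' : ∑ j, cosFloor (θ j) < N * (1 / Real.sqrt 2 - 3 * ε / 20 - 1) := not_le.1 hθ
    simp only [Set.mem_ofPred_eq, Finset.sum_sub_distrib, Finset.sum_neg_distrib, Finset.sum_const,
      Finset.card_univ, Fintype.card_fin, nsmul_eq_mul]
    have : (N:ℝ) * (Real.sqrt 2 / 5 * ε + m) ≤ N * (-(1 / Real.sqrt 2 - 3 * ε / 20 - 1)) := by
      gcongr
      rw [hs] at hm' ⊢
      nlinarith
    linarith
  have hle : μ.real Gᶜ ≤ Real.exp (-(ε^2 * N) / 25) := (measureReal_mono hsub).trans hH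
  rw [probReal_compl_eq_one_sub hGm] at hle
  rw [← ofReal_measureReal]
  exact ENNReal.ofReal_le_ofReal (by linarith)

/-! ### Lower bound for the order parameter -/

lemma cosFloor_le_of_good {x c : ℝ} (hc : min (Real.cos x) (1 / Real.sqrt 2) ≤ c) :
    cosFloor x ≤ c := by
  obtain ⟨hk0, hk2⟩ := inv_sqrt_two_facts
  refine le_trans ?_ hc
  have h2 := Real.cos_le_one x
  have hk1 : 1 / Real.sqrt 2 ≤ 1 := by nlinarith
  set k := 1 / Real.sqrt 2
  unfold cosFloor outer
  by_cases h : 1 / 2 < Real.cos x ^ 2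
  · simp only [Set.indicator_apply, Set.mem_ofPred_eq, h, if_true, Pi.one_apply]
    exact le_min (by linarith) (by linarith)
  · simp only [Set.indicator_apply, Set.mem_ofPred_eq, h, if_false]
    refine le_min (by linarith) ?_
    nlinarith

lemma cosFloor_le_of_bad {x : ℝ} (hx : Real.cos x < -(1 / Real.sqrt 2)) (y : ℝ) :
    cosFloor x ≤ Real.cos y := by
  obtain ⟨hk0, hk2⟩ := inv_sqrt_two_facts
  refine le_trans ?_ (Real.neg_one_le_cos y)
  set k := 1 / Real.sqrt 2
  have h : 1 / 2 < Real.cos x ^ 2 := by nlinarith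
  unfold cosFloor outer
  simp only [Set.indicator_apply, Set.mem_ofPred_eq, h, if_true, Pi.one_apply]
  linarith

/-- Bootstrap for the order parameter. As long as `R ≥ r`, the barrier lemma bounds every
`cos (θ j)` below by `cosFloor (θ j 0)`, and averaging yields `R ≥ ρ > r`. Hence at the first time
when `R ≤ r` one would have `R ≥ ρ > r`, a contradiction. -/
lemma orderParam_bootstrap {N : ℕ} (hN : 1 ≤ N) {ω : Fin N → ℝ} {κ r ρ : ℝ} {θ : Fin N → ℝ → ℝ}
    (hκ : 0 ≤ κ)
    (hd : ∀ i, ∀ t : ℝ, 0 ≤ t →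
      HasDerivAt (θ i) (ω i - κ * orderParam N θ t * Real.sin (θ i t)) t)
    (hr : ∀ i, |ω i| < κ * r * (1 / Real.sqrt 2)) (hrρ : r < ρ)
    (h0 : N * (ρ - 1) ≤ ∑ j, cosFloor (θ j 0)) :
    ∀ t, 0 ≤ t → ρ ≤ orderParam N θ t := by
  obtain ⟨hk0, hk2⟩ := inv_sqrt_two_facts
  have hN0 : (0 : ℝ) < N := by exact_mod_cast hN
  have key : ∀ T, 0 ≤ T → (∀ t ∈ Set.Icc 0 T, r ≤ orderParam N θ t) →
      ρ ≤ orderParam N θ T := by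
    intro T hT hR
    have hj : ∀ j, cosFloor (θ j 0) ≤ Real.cos (θ j T) := by
      intro j
      rcases lt_or_ge (Real.cos (θ j 0)) (-(1 / Real.sqrt 2)) with h | h
      · exact cosFloor_le_of_bad h _
      · refine cosFloor_le_of_good (cos_barrier hk0 hk2 (fun t ht => hd j t ht.1) ?_ ?_
          (min_le_left _ _) T ⟨hT, le_rfl⟩)
        · intro t ht
          refine (hr j).trans_le ?_
          have := hR t ht
          gcongr
        · exact abs_le.2 ⟨le_min h (by linarith), min_le_right _ _⟩
    rw [orderParam, le_inv_mul_iff₀ hN0, Finset.sum_add_distrib]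
    have := Finset.sum_le_sum fun j (_ : j ∈ Finset.univ) => hj j
    simp only [Finset.sum_const, Finset.card_univ, Fintype.card_fin, nsmul_eq_mul]
    linarith
  have hcont : ContinuousOn (orderParam N θ) (Set.Ici 0) := by
    unfold orderParam
    refine continuousOn_const.mul (continuousOn_finsetSum _ fun j _ => ?_)
    exact continuousOn_const.add (Real.continuous_cos.comp_continuousOn
      fun t ht => (hd j t ht).continuousAt.continuousWithinAt)
  have h00 : 0 ≤ (0 : ℝ) := le_rfl
  have hall : ∀ t, 0 ≤ t → r ≤ orderParam N θ t := by
    by_contra! hex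
    obtain ⟨t, ht, hlt⟩ := hex
    set G : Set ℝ := Set.Ici 0 ∩ orderParam N θ ⁻¹' Set.Iic r with hG
    have hGc : IsClosed G := hcont.preimage_isClosed_of_isClosed isClosed_Ici isClosed_Iic
    have hGb : BddBelow G := ⟨0, fun t ht => ht.1⟩
    have hGT : sInf G ∈ G := hGc.csInf_mem ⟨t, ht, hlt.le⟩ hGb
    have hle : orderParam N θ (sInf G) ≤ r := hGT.2
    have hbefore : ∀ s ∈ Set.Ico 0 (sInf G), r ≤ orderParam N θ s := by
      intro s hs
      by_contra! h
      exact absurd (csInf_le hGb (⟨hs.1, h.le⟩ : s ∈ G)) (not_le.2 hs.2)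
    -- at `t = 0` the bound comes from the initial data, at positive times from continuity
    have hat : r ≤ orderParam N θ (sInf G) := by
      rcases (show (0 : ℝ) ≤ sInf G from hGT.1).eq_or_lt with h | h
      · rw [← h, orderParam, le_inv_mul_iff₀ hN0, Finset.sum_add_distrib]
        have := Finset.sum_le_sum fun j (_ : j ∈ Finset.univ) =>
          cosFloor_le_of_good (x := θ j 0) (min_le_left _ _)
        simp only [Finset.sum_const, Finset.card_univ, Fintype.card_fin, nsmul_eq_mul]
        nlinarith
      · have hcl : sInf G ∈ closure (Set.Ico 0 (sInf G)) := by
          rw [closure_Ico h.ne]; exact ⟨h.le, le_rfl⟩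
        have hct : ContinuousWithinAt (orderParam N θ) (Set.Ico 0 (sInf G)) (sInf G) :=
          (hcont _ hGT.1).mono fun s hs => hs.1
        have := hct.mem_closure hcl (t := Set.Ici r) hbefore
        rwa [isClosed_Ici.closure_eq] at this
    have := key _ hGT.1 fun s hs => by
      rcases hs.2.lt_or_eq with h | h
      · exact hbefore s ⟨hs.1, h⟩
      · rw [h]; exact hat
    linarith
  exact fun t ht => key t ht fun s hs => hall s hs.1

theorem stmt1 (N : ℕ) (hN : 1 ≤ N) (ω : Fin N → ℝ) (κ ε : ℝ) (Ωn : ℝ)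
    (hΩn : IsGreatest (Set.range fun i => |ω i|) Ωn)
    (hε : ε ∈ Set.Ioc (0:ℝ) 1) (hκ : (2 + ε) * Ωn < κ) :
    ENNReal.ofReal (1 - Real.exp (-(ε^2 * N) / 25)) ≤
      normBox N {θ0 : Fin N → ℝ | ∃ θ : Fin N → ℝ → ℝ, IsWinfreeSol N ω κ θ0 θ ∧
        (∀ t : ℝ, 0 ≤ t → 1 / Real.sqrt 2 - 3 * ε / 20 ≤ orderParam N θ t) ∧
        (∀ i, OscLt2Pi (θ i)) ∧
        (∀ i, ∀ t₀ : ℝ, 0 ≤ t₀ → -(1 / Real.sqrt 2) ≤ Real.cos (θ i t₀) →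
          (∀ t, t₀ ≤ t → -(1 / Real.sqrt 2) ≤ Real.cos (θ i t)) ∧
          (∀ t, t₀ + (2 + ε) * Real.pi / (κ - (2 + ε) * Ωn) ≤ t →
            1 / Real.sqrt 2 ≤ Real.cos (θ i t)))} := by
  refine (hoeffding N hN ε hε).trans (measure_mono ?_)
  intro θ0 hθ0
  obtain ⟨hε0, hε1⟩ := hε
  obtain ⟨hk0, hk2⟩ := inv_sqrt_two_facts
  obtain ⟨θ, hi, hd⟩ := exists_winfreeSol N ω κ θ0
  have hω : ∀ i, |ω i| ≤ Ωn := fun i => hΩn.2 ⟨i, rfl⟩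
  have hΩ0 : 0 ≤ Ωn := (abs_nonneg _).trans (hω ⟨0, hN⟩)
  have hκ0 : 0 < κ := lt_of_le_of_lt (by positivity) hκ
  have hd' : ∀ i, ∀ t : ℝ, 0 ≤ t →
      HasDerivAt (θ i) (ω i - κ * orderParam N θ t * Real.sin (θ i t)) t := by
    intro i t ht
    convert hd i t ht using 1
    rw [orderParam]; ring
  -- the smallest value of `R` at which the coupling beats every frequency at `|sin| = 1/√2`
  set r := 2 * (1 / Real.sqrt 2) / (2 + ε) with hr
  have hrk : κ * r * (1 / Real.sqrt 2) = κ / (2 + ε) := by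
    calc κ * r * (1 / Real.sqrt 2) = κ * (2 * (1 / Real.sqrt 2) ^ 2) / (2 + ε) := by
          rw [hr]; ring
      _ = _ := by rw [hk2]; ring
  set δ := κ / (2 + ε) - Ωn with hδ
  have hδe : δ = (κ - (2 + ε) * Ωn) / (2 + ε) := by rw [hδ]; field_simp
  have hD : 0 < κ - (2 + ε) * Ωn := by linarith
  have hδ0 : 0 < δ := by rw [hδe]; positivity
  have hrρ : r < 1 / Real.sqrt 2 - 3 * ε / 20 := by
    rw [hr, div_lt_iff₀ (by positivity)]
    have : 0.7 < 1 / Real.sqrt 2 := by nlinarith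
    nlinarith
  have hR := orderParam_bootstrap hN hκ0.le hd' (r := r)
    (fun i => by rw [hrk]; linarith [hω i]) hrρ (by simpa only [hi, Set.mem_ofPred_eq] using hθ0)
  have hA : ∀ i, ∀ t, 0 ≤ t → δ ≤ κ * orderParam N θ t * (1 / Real.sqrt 2) - |ω i| := by
    intro i t ht
    have h1 : κ * r * (1 / Real.sqrt 2) ≤ κ * orderParam N θ t * (1 / Real.sqrt 2) := by
      have := hR t ht
      gcongr
      linarith
    linarith [hω i]
  have hinv : ∀ i, ∀ s : ℝ, 0 ≤ s → -(1 / Real.sqrt 2) ≤ Real.cos (θ i s) →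
      ∀ t, s ≤ t → -(1 / Real.sqrt 2) ≤ Real.cos (θ i t) := by
    intro i s hs hg t ht
    exact cos_barrier hk0 hk2 (fun u hu => hd' i u (hs.trans hu.1))
      (fun u hu => by linarith [hA i u (hs.trans hu.1)]) (by rw [abs_neg, abs_of_pos hk0]) hg
      t ⟨ht, le_rfl⟩
  refine ⟨θ, ⟨hi, hd⟩, hR, fun i => osc_of_invariant
    (fun t ht => (hd i t ht).continuousAt.continuousWithinAt) (hinv i),
    fun i t₀ ht₀ hg => ⟨hinv i t₀ ht₀ hg, fun t ht => ?_⟩⟩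
  refine cos_arrival hk0 hk2 (fun u hu => hd' i u (ht₀.trans hu.1)) hδ0
    (fun u hu => hA i u (ht₀.trans hu.1)) hg ?_
  -- the band is crossed within time `2 / δ`, which is at most the stated `π / δ`
  calc (2 : ℝ) ≤ Real.pi := Real.two_le_pi
    _ = δ * ((2 + ε) * Real.pi / (κ - (2 + ε) * Ωn)) := by rw [hδe]; field_simp
    _ ≤ δ * (t - t₀) := by gcongr; linarith
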